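/- The 7×7 integer matrix Q_7^c is a locally optimal lattice covering: there exists an open neighborhood U of Q_7^c in the real vector space of symmetric 7×7 matrices such that Θ(Q′) ≥ Θ(Q_7^c) for every real symmetric positive definite matrix Q′ ∈ U. -/

import Mathlib

/-!
The form `Q7c` belongs to the lattice generated by `ℤ⁷` and `(1/3, …, 1/3)` with the norm
`11 ∑ yᵢ² + (∑ yᵢ)²`: the integral coordinate change `baseU` turns its Gram matrix into
`S0 = 11 I + J`. The symmetric group on seven letters and `-1` act on this lattice (`covLat`, scaled
by `66`), and under translations and these symmetries its Delaunay triangulation has three orbits of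
simplices, called types `0`, `1`, `2`, with squared circumradii `15/2`, `15/2` and `82/11`.

*The covering radius of `Q7c`.* To see that every `x` is within squared distance `15/2` of the lattice,
choose among all images of the three simplices one whose power function
`nf (x - c) - R²` at `x` is minimal. The difference of the power functions of two simplices with a
common facet is a positive multiple of the barycentric coordinate belonging to that facet, so
minimality against the eight neighbors, which are listed explicitly, puts `x` inside the simplex
(`bc_nonneg`); hence some vertex is within the circumradius (`exists_vtx_close`). No global statement
about the triangulation is needed.

*Lower bound for nearby forms.* The Delaunay simplices of types `0` and `1` have no lattice points on
their circumspheres besides the vertices, so they stay Delaunay simplices for every `S` near `S0`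
(`lower_base`). If `c = ∑ αᵢ vᵢ` is the old circumcenter, with all `αᵢ > 0`, the squared circumradius
with respect to `S` is at least the linear function `mval S = ∑ αᵢ S[c - vᵢ]`. Average these linear
functions over the symmetric group, and combine the two types with weights `3/4` and `1/4`: the result
is `(15/2) tr (S0⁻¹ S) / 7` (`trace_le_of_mval_le`), which is therefore a lower bound for the largest of
the squared circumradii. The inequality of arithmetic and geometric means for the eigenvalues gives
`det S / det S0 ≤ (tr (S0⁻¹ S) / 7) ^ 7` (`det_P0_mul_le`), and the two inequalities together compare
the covering densities.
-/

open Matrix MeasureTheory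

/-- The inhomogeneous minimum `μ(Q) = sup_x inf_{v ∈ ℤᵈ} Q[x - v]` of a quadratic form. -/
noncomputable def inhomMin {d : ℕ} (Q : Matrix (Fin d) (Fin d) ℝ) : ℝ :=
  ⨆ x : Fin d → ℝ, ⨅ v : Fin d → ℤ,
    (x - fun i => (v i : ℝ)) ⬝ᵥ (Q *ᵥ (x - fun i => (v i : ℝ)))

/-- The homogeneous minimum `λ(Q) = min_{v ∈ ℤᵈ, v ≠ 0} Q[v]` of a quadratic form. -/
noncomputable def homMin {d : ℕ} (Q : Matrix (Fin d) (Fin d) ℝ) : ℝ :=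
  ⨅ v : {w : Fin d → ℤ // w ≠ 0},
    (fun i => (v.1 i : ℝ)) ⬝ᵥ (Q *ᵥ fun i => (v.1 i : ℝ))

/-- `κ_d`, the Lebesgue volume of the `d`-dimensional Euclidean unit ball. -/
noncomputable def unitBallVol (d : ℕ) : ℝ :=
  (volume (Metric.ball (0 : EuclideanSpace ℝ (Fin d)) 1)).toReal

/-- The covering density `Θ(Q) = √(μ(Q)^d / det Q) · κ_d`. -/
noncomputable def covDensity {d : ℕ} (Q : Matrix (Fin d) (Fin d) ℝ) : ℝ :=
  Real.sqrt (inhomMin Q ^ d / Q.det) * unitBallVol d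


/-- The quadratic form `Q₇^c`. -/
def Q7c : Matrix (Fin 7) (Fin 7) ℝ :=
  !![12, 1, 1, 1, 1, 1, 5;
     1, 12, 1, 1, 1, 1, 5;
     1, 1, 12, 1, 1, 1, 5;
     1, 1, 1, 12, 1, 1, 5;
     1, 1, 1, 1, 12, 1, 5;
     1, 1, 1, 1, 1, 12, -6;
     5, 5, 5, 5, 5, -6, 14]

/-! ### The lattice and its Delaunay simplices -/

/-- The value `zᵀ S z` of the quadratic form `S`. -/
def qf (S : Matrix (Fin 7) (Fin 7) ℝ) (z : Fin 7 → ℝ) : ℝ := z ⬝ᵥ (S *ᵥ z)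

/-- The Gram matrix `11 I + J`, where `J` is the all-ones matrix. -/
def S0 : Matrix (Fin 7) (Fin 7) ℝ := Matrix.of fun i j => if i = j then 12 else 1

/-- The form `11 ∑ zᵢ² + (∑ zᵢ)²` of `S0`. -/
def nf (z : Fin 7 → ℝ) : ℝ := 11 * ∑ i, z i ^ 2 + (∑ i, z i) ^ 2

/-- The lattice `ℤ⁷ + ℤ (1/3, …, 1/3)`, scaled by `66` so that the circumcenters of its Delaunay
simplices become integral. -/
def covLat : AddSubgroup (Fin 7 → ℝ) where
  carrier := {z | ∃ (k : ℤ) (n : Fin 7 → ℤ), ∀ i, z i = 66 * n i + 22 * k}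
  zero_mem' := ⟨0, 0, by simp⟩
  add_mem' := by
    rintro a b ⟨k, n, h⟩ ⟨k', n', h'⟩
    exact ⟨k + k', n + n', fun i => by simp [h, h']; ring⟩
  neg_mem' := by
    rintro a ⟨k, n, h⟩
    exact ⟨-k, -n, fun i => by simp [h]; ring⟩

/-- The circumcenters, in units of `1/66`, of three simplices that represent the orbits of Delaunay
simplices of `covLat`. -/
def cen : Fin 3 → Fin 7 → ℤ :=
  ![![1, 7, 7, 37, 37, 43, 55],
    ![5, 11, 17, 35, 35, 53, 53],
    ![0, 12, 12, 36, 36, 48, 54]]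

/-- The squared circumradii of the three simplices for `nf`, in units of `1/66 ^ 2`: `15/2`, `15/2`
and `82/11`. -/
def rad : Fin 3 → ℤ := ![32670, 32670, 32472]

/-- The eight vertices of the simplex of type `j`, in units of `1/3`; in units of `1/66` they are
`22 * vtx j i`. -/
def vtx : Fin 3 → Fin 8 → Fin 7 → ℤ :=
  ![![![0, 0, 0, 0, 3, 3, 3],
      ![0, 0, 0, 3, 0, 3, 3],
      ![0, 0, 0, 3, 3, 3, 3],
      ![1, 1, 1, 1, 1, 1, 1],
      ![1, 1, 1, 1, 1, 1, 4],
      ![-1, -1, -1, 2, 2, 2, 2],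
      ![-1, -1, 2, 2, 2, 2, 2],
      ![-1, 2, -1, 2, 2, 2, 2]],
    ![![0, 0, 0, 0, 3, 3, 3],
      ![0, 0, 0, 3, 0, 3, 3],
      ![0, 0, 0, 3, 3, 3, 3],
      ![1, 1, 1, 1, 1, 1, 1],
      ![1, 1, 1, 1, 1, 1, 4],
      ![1, 1, 1, 1, 1, 4, 1],
      ![-1, -1, 2, 2, 2, 2, 2],
      ![-1, 2, 2, 2, 2, 2, 2]],
    ![![0, 0, 0, 0, 3, 3, 3],
      ![0, 0, 0, 3, 0, 3, 3],
      ![0, 0, 0, 3, 3, 3, 3],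
      ![1, 1, 1, 1, 1, 1, 1],
      ![1, 1, 1, 1, 1, 1, 4],
      ![-1, -1, 2, 2, 2, 2, 2],
      ![-1, 2, -1, 2, 2, 2, 2],
      ![-1, 2, 2, 2, 2, 2, 2]]]

/-- `22` times the barycentric coordinates of the circumcenter `cen j`; all of them are positive. -/
def wt : Fin 3 → Fin 8 → ℤ :=
  ![![2, 2, 3, 4, 4, 3, 2, 2],
    ![3, 3, 3, 3, 3, 3, 2, 2],
    ![4, 4, 2, 4, 2, 2, 2, 2]]

/-- The linear parts of the barycentric coordinates of the simplex of type `j`: `66` times the `i`-th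
coordinate of `x` is `∑ k, bary j i k * (x k - cen j k) + 3 * wt j i`, see `bc`. -/
def bary : Fin 3 → Fin 8 → Fin 7 → ℤ :=
  ![![![0, 0, 0, -1, 0, 1, 0],
      ![0, 0, 0, 0, -1, 1, 0],
      ![1, 0, 0, 1, 1, 0, 0],
      ![1, 0, 0, 0, 0, 0, -1],
      ![0, 0, 0, 0, 0, -1, 1],
      ![0, -1, -1, 0, 0, -1, 0],
      ![-1, 0, 1, 0, 0, 0, 0],
      ![-1, 1, 0, 0, 0, 0, 0]],
    ![![-1, 0, -1, -1, 0, 0, 0],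
      ![-1, 0, -1, 0, -1, 0, 0],
      ![1, 0, 0, 1, 1, 0, 0],
      ![0, 0, -1, 0, 0, -1, -1],
      ![1, 0, 1, 0, 0, 0, 1],
      ![1, 0, 1, 0, 0, 1, 0],
      ![0, -1, 1, 0, 0, 0, 0],
      ![-1, 1, 0, 0, 0, 0, 0]],
    ![![0, 0, 0, -1, 0, 1, 0],
      ![0, 0, 0, 0, -1, 1, 0],
      ![1, 0, 0, 1, 1, 0, 0],
      ![1, 0, 0, 0, 0, 0, -1],
      ![0, 0, 0, 0, 0, -1, 1],
      ![-1, -1, 0, 0, 0, -1, 0],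
      ![-1, 0, -1, 0, 0, -1, 0],
      ![0, 1, 1, 0, 0, 1, 0]]]

/-- The type of the simplex adjacent to simplex `j` across the facet opposite to vertex `i`. -/
def nbType : Fin 3 → Fin 8 → Fin 3 :=
  ![![0, 0, 2, 0, 0, 2, 0, 0],
    ![2, 2, 2, 2, 2, 2, 1, 1],
    ![2, 2, 1, 2, 2, 1, 1, 0]]

/-- The coordinate permutation that carries the simplex of type `nbType j i` to the neighbor, up to
sign and translation. -/
def nbPerm : Fin 3 → Fin 8 → Fin 7 → Fin 7 :=
  ![![![0, 1, 2, 5, 3, 4, 6],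
      ![0, 1, 2, 3, 5, 4, 6],
      ![5, 3, 4, 1, 2, 0, 6],
      ![6, 1, 2, 3, 4, 5, 0],
      ![0, 1, 2, 3, 4, 6, 5],
      ![0, 1, 2, 3, 4, 5, 6],
      ![1, 2, 0, 3, 4, 5, 6],
      ![1, 0, 2, 3, 4, 5, 6]],
    ![![1, 2, 0, 5, 6, 3, 4],
      ![1, 2, 0, 6, 5, 3, 4],
      ![0, 6, 5, 3, 4, 1, 2],
      ![5, 6, 0, 1, 2, 3, 4],
      ![0, 1, 2, 3, 4, 6, 5],
      ![0, 1, 2, 3, 4, 5, 6],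
      ![0, 2, 1, 3, 4, 5, 6],
      ![1, 0, 2, 3, 4, 5, 6]],
    ![![0, 1, 2, 5, 3, 4, 6],
      ![0, 1, 2, 3, 5, 4, 6],
      ![2, 3, 4, 5, 6, 0, 1],
      ![6, 1, 2, 3, 4, 5, 0],
      ![0, 1, 2, 3, 4, 6, 5],
      ![0, 2, 1, 3, 4, 5, 6],
      ![0, 1, 2, 3, 4, 5, 6],
      ![0, 1, 2, 3, 4, 5, 6]]]

/-- The sign that goes with `nbPerm`. -/
def nbSign : Fin 3 → Fin 8 → ℤ :=
  ![![1, 1, -1, 1, 1, 1, 1, 1],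
    ![-1, -1, -1, 1, 1, 1, 1, 1],
    ![1, 1, 1, 1, 1, 1, 1, 1]]

/-- The circumcenter of the simplex adjacent to simplex `j` across the facet opposite to vertex `i`. -/
def nbCen : Fin 3 → Fin 8 → Fin 7 → ℤ :=
  ![![![1, 7, 7, 43, 37, 37, 55],
      ![1, 7, 7, 37, 43, 37, 55],
      ![-4, 8, 8, 32, 32, 44, 56],
      ![-11, 7, 7, 37, 37, 43, 67],
      ![1, 7, 7, 37, 37, 55, 43],
      ![0, 12, 12, 36, 36, 48, 54],
      ![7, 7, 1, 37, 37, 43, 55],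
      ![7, 1, 7, 37, 37, 43, 55]],
    ![![10, 10, 22, 40, 34, 52, 52],
      ![10, 10, 22, 34, 40, 52, 52],
      ![0, 12, 18, 30, 30, 54, 54],
      ![4, 10, 22, 34, 34, 58, 58],
      ![0, 12, 12, 36, 36, 54, 48],
      ![0, 12, 12, 36, 36, 48, 54],
      ![5, 17, 11, 35, 35, 53, 53],
      ![11, 5, 17, 35, 35, 53, 53]],
    ![![0, 12, 12, 48, 36, 36, 54],
      ![0, 12, 12, 36, 48, 36, 54],
      ![-5, 13, 13, 31, 31, 49, 55],
      ![-12, 12, 12, 36, 36, 48, 66],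
      ![0, 12, 12, 36, 36, 54, 48],
      ![5, 17, 11, 35, 35, 53, 53],
      ![5, 11, 17, 35, 35, 53, 53],
      ![1, 7, 7, 37, 37, 43, 55]]]

/-- The factor by which the difference of the power functions of two adjacent simplices exceeds the
barycentric coordinate that vanishes on the common facet. -/
def nbScale : Fin 3 → Fin 8 → ℤ :=
  ![![132, 132, 132, 264, 264, 132, 132, 132],
    ![132, 132, 132, 132, 132, 132, 132, 132],
    ![264, 264, 132, 264, 132, 132, 132, 132]]

theorem qf_S0 (z : Fin 7 → ℝ) : qf S0 z = nf z := by
  simp only [qf, S0, nf, dotProduct, mulVec, Fin.sum_univ_seven, Matrix.of_apply]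
  simp
  ring

theorem mem_covLat {z : Fin 7 → ℝ} :
    z ∈ covLat ↔ ∃ (k : ℤ) (n : Fin 7 → ℤ), ∀ i, z i = 66 * n i + 22 * k := Iff.rfl

theorem covLat_comp {z : Fin 7 → ℝ} (hz : z ∈ covLat) (σ : Equiv.Perm (Fin 7)) :
    z ∘ σ ∈ covLat := by
  obtain ⟨k, n, h⟩ := hz
  exact ⟨k, n ∘ σ, fun i => h (σ i)⟩

theorem covLat_unit_smul {z : Fin 7 → ℝ} (hz : z ∈ covLat) (e : ℤˣ) :
    ((e : ℤ) : ℝ) • z ∈ covLat := by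
  rcases Int.units_eq_one_or e with rfl | rfl
  · simpa using hz
  · simpa using hz

/-- Congruence criterion for an integral vector to lie in `covLat`. -/
theorem mem_covLat_of_int (D : Fin 7 → ℤ) (h0 : D 0 % 22 = 0) (h : ∀ i, (D i - D 0) % 66 = 0) :
    (fun i => (D i : ℝ)) ∈ covLat := by
  obtain ⟨k, hk⟩ := Int.dvd_of_emod_eq_zero h0
  choose n hn using fun i => Int.dvd_of_emod_eq_zero (h i)
  refine ⟨k, n, fun i => ?_⟩
  have : D i = 66 * n i + 22 * k := by linarith [hn i]
  show (D i : ℝ) = _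
  exact_mod_cast this

theorem nf_comp (z : Fin 7 → ℝ) (σ : Equiv.Perm (Fin 7)) : nf (z ∘ σ) = nf z := by
  simp only [nf, Function.comp_apply]
  rw [Equiv.sum_comp σ (fun i => z i ^ 2), Equiv.sum_comp σ z]

theorem nf_unit_smul (z : Fin 7 → ℝ) (e : ℤˣ) : nf (((e : ℤ) : ℝ) • z) = nf z := by
  rcases Int.units_eq_one_or e with rfl | rfl <;> simp [nf]

theorem nf_nonneg (z : Fin 7 → ℝ) : 0 ≤ nf z := by
  unfold nf; positivity

theorem covLat_finite (p : Fin 7 → ℝ) (K : ℝ) :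
    {z : Fin 7 → ℝ | z ∈ covLat ∧ ∑ i, (p i - z i) ^ 2 ≤ K}.Finite := by
  refine ((Set.finite_Icc (fun i => ⌊(p i - K - 1) / 22⌋) (fun i => ⌈(p i + K + 1) / 22⌉)).image
    (fun (w : Fin 7 → ℤ) i => 22 * (w i : ℝ))).subset ?_
  rintro z ⟨⟨k, n, h⟩, hK⟩
  have hb : ∀ i, (p i - z i) ^ 2 ≤ K := fun i =>
    (Finset.single_le_sum (f := fun i => (p i - z i) ^ 2) (fun i _ => sq_nonneg _)
      (Finset.mem_univ i)).trans hK
  refine ⟨fun i => 3 * n i + k, ⟨fun i => ?_, fun i => ?_⟩, ?_⟩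
  · have h1 : p i - K - 1 ≤ z i := by nlinarith [hb i, sq_nonneg (p i - z i - 1)]
    have h2 : (p i - K - 1) / 22 ≤ ((3 * n i + k : ℤ) : ℝ) := by
      push_cast; linarith [h i]
    exact_mod_cast (Int.floor_le _).trans h2
  · have h1 : z i ≤ p i + K + 1 := by nlinarith [hb i, sq_nonneg (p i - z i + 1)]
    have h2 : ((3 * n i + k : ℤ) : ℝ) ≤ (p i + K + 1) / 22 := by
      push_cast; linarith [h i]
    exact_mod_cast h2.trans (Int.le_ceil _)
  · funext i
    simp only [h i]
    push_cast; ring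

theorem exists_closest (p : Fin 7 → ℝ) :
    ∃ t ∈ covLat, ∀ t' ∈ covLat, nf (p - t) ≤ nf (p - t') := by
  have hn : ∀ t, 11 * ∑ i, (p i - t i) ^ 2 ≤ nf (p - t) := fun t => by
    simp only [nf, Pi.sub_apply]; nlinarith [sq_nonneg (∑ i, (p i - t i))]
  have h0 : (0 : Fin 7 → ℝ) ∈ {z | z ∈ covLat ∧ ∑ i, (p i - z i) ^ 2 ≤ nf p / 11} := by
    refine ⟨zero_mem _, ?_⟩
    have := hn 0
    rw [sub_zero] at this
    linarith
  obtain ⟨t, ht, hmin⟩ := Set.exists_min_image _ (fun t => nf (p - t)) (covLat_finite p (nf p / 11))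
    ⟨0, h0⟩
  refine ⟨t, ht.1, fun t' ht' => ?_⟩
  by_cases h : ∑ i, (p i - t' i) ^ 2 ≤ nf p / 11
  · exact hmin t' ⟨ht', h⟩
  · have h1 := hmin 0 h0
    simp only [sub_zero] at h1
    have h2 := hn t'
    linarith

/-- The circumcenter of the simplex of type `j` as a real vector. -/
def cenR (j : Fin 3) : Fin 7 → ℝ := fun i => (cen j i : ℝ)

/-- The vertex `i` of the simplex of type `j` as a point of `covLat`. -/
def vtxR (j : Fin 3) (i : Fin 8) : Fin 7 → ℝ := fun k => 22 * (vtx j i k : ℝ)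

/-- `66` times the `i`-th barycentric coordinate of `x` in the simplex of type `j`. -/
def bc (j : Fin 3) (i : Fin 8) (x : Fin 7 → ℝ) : ℝ :=
  ∑ k, (bary j i k : ℝ) * (x k - cen j k) + 3 * wt j i

theorem nf_cen_sub_vtx (j : Fin 3) (i : Fin 8) : nf (cenR j - vtxR j i) = rad j := by
  have h : ∀ j i, 11 * ∑ k, (cen j k - 22 * vtx j i k) ^ 2 + (∑ k, (cen j k - 22 * vtx j i k)) ^ 2
      = rad j := by decide +kernel
  simp only [nf, cenR, vtxR, Pi.sub_apply]
  exact_mod_cast h j i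

theorem vtxR_mem (j : Fin 3) (i : Fin 8) : vtxR j i ∈ covLat := by
  have h : ∀ j i, (22 * vtx j i 0) % 22 = 0 ∧ ∀ k, (22 * vtx j i k - 22 * vtx j i 0) % 66 = 0 := by
    decide +kernel
  have := mem_covLat_of_int (fun k => 22 * vtx j i k) (h j i).1 (h j i).2
  rw [show vtxR j i = fun k => ((22 * vtx j i k : ℤ) : ℝ) from funext fun k => by simp [vtxR]]
  exact this

theorem sum_wt (j : Fin 3) : ∑ i, (wt j i : ℝ) = 22 := by
  have h : ∀ j, ∑ i, wt j i = 22 := by decide +kernel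
  exact_mod_cast h j

theorem sum_bc (j : Fin 3) (x : Fin 7 → ℝ) : ∑ i, bc j i x = 66 := by
  have h : ∀ j k, ∑ i, bary j i k = 0 := by decide +kernel
  have h' : ∀ k, ∑ i, (bary j i k : ℝ) = 0 := fun k => by exact_mod_cast h j k
  simp only [bc, Finset.sum_add_distrib]
  rw [Finset.sum_comm, ← Finset.mul_sum, sum_wt]
  simp only [← Finset.sum_mul, h']
  norm_num

theorem sum_bc_mul (j : Fin 3) (x : Fin 7 → ℝ) (l : Fin 7) :
    ∑ i, bc j i x * vtxR j i l = 66 * x l := by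
  have h1 : ∀ j k l, ∑ i, bary j i k * (22 * vtx j i l) = if k = l then 66 else 0 := by
    decide +kernel
  have h2 : ∀ j l, ∑ i, wt j i * vtx j i l = cen j l := by decide +kernel
  have h1' : ∀ k, ∑ i, (bary j i k : ℝ) * (22 * vtx j i l) = if k = l then 66 else 0 :=
    fun k => by exact_mod_cast h1 j k l
  have h2' : ∑ i, (wt j i : ℝ) * vtx j i l = cen j l := by exact_mod_cast h2 j l
  calc ∑ i, bc j i x * vtxR j i l
      = ∑ k, (∑ i, (bary j i k : ℝ) * (22 * vtx j i l)) * (x k - cen j k)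
        + 66 * ∑ i, (wt j i : ℝ) * vtx j i l := by
        simp only [bc, vtxR, add_mul, Finset.sum_add_distrib, Finset.sum_mul, Finset.mul_sum]
        rw [Finset.sum_comm]
        congr 1
        · exact Finset.sum_congr rfl fun k _ => Finset.sum_congr rfl fun i _ => by ring
        · exact Finset.sum_congr rfl fun i _ => by ring
    _ = 66 * x l := by
        simp only [h1', h2', ite_mul, zero_mul, Finset.sum_ite_eq', Finset.mem_univ, if_true]
        ring

/-! ### The covering radius -/

/-- A point of a simplex is within the circumradius of some vertex: averaging `nf (x - v)` over the
vertices `v` with the barycentric coordinates of `x` as weights gives `R² - nf (x - c)`. -/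
theorem exists_vtx_close (j : Fin 3) (x : Fin 7 → ℝ) (hx : ∀ i, 0 ≤ bc j i x) :
    ∃ i, nf (x - vtxR j i) ≤ rad j := by
  by_contra! hcon
  have hexp : ∀ i, nf (x - vtxR j i) - rad j = nf (x - cenR j)
      + ∑ l, (22 * (x l - cenR j l) + 2 * ∑ k, (x k - cenR j k)) * (cenR j l - vtxR j i l) := by
    intro i
    rw [← nf_cen_sub_vtx j i]
    simp only [nf, Pi.sub_apply, Fin.sum_univ_seven]
    ring
  have hs : ∑ i, bc j i x * (nf (x - vtxR j i) - rad j) = - 66 * nf (x - cenR j) := by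
    have e : ∀ i, bc j i x * (nf (x - vtxR j i) - rad j) = bc j i x * nf (x - cenR j)
      + ∑ l, (22 * (x l - cenR j l) + 2 * ∑ k, (x k - cenR j k)) *
        (bc j i x * cenR j l - bc j i x * vtxR j i l) := fun i => by
      rw [hexp, mul_add, Finset.mul_sum]
      congr 1
      exact Finset.sum_congr rfl fun l _ => by ring
    simp only [e, Finset.sum_add_distrib]
    rw [Finset.sum_comm, ← Finset.sum_mul, sum_bc]
    simp only [← Finset.mul_sum, Finset.sum_sub_distrib, ← Finset.sum_mul, sum_bc, sum_bc_mul]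
    simp only [nf, Pi.sub_apply, Fin.sum_univ_seven]
    ring
  have hpos : 0 < ∑ i, bc j i x * (nf (x - vtxR j i) - rad j) := by
    refine Finset.sum_pos' (fun i _ => mul_nonneg (hx i) (sub_nonneg.2 (hcon i).le)) ?_
    by_contra! h
    have : ∑ i, bc j i x ≤ 0 := Finset.sum_nonpos fun i hi => by
      by_contra! h'
      exact absurd (h i hi) (not_le.2 (mul_pos h' (sub_pos.2 (hcon i))))
    rw [sum_bc] at this
    norm_num at this
  linarith [nf_nonneg (x - cenR j)]

/-- Comparing power functions across the facet opposite to vertex `i` shows that `x` lies on the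
inner side of that facet. -/
theorem bc_nonneg (j : Fin 3) (x : Fin 7 → ℝ)
    (hmin : ∀ (j' : Fin 3) (σ : Equiv.Perm (Fin 7)) (e : ℤˣ), ∀ t ∈ covLat,
      nf (x - cenR j) - rad j ≤ nf (x - (((e : ℤ) : ℝ) • (cenR j' ∘ σ) + t)) - rad j')
    (i : Fin 8) : 0 ≤ bc j i x := by
  have hinj : ∀ j i, Function.Injective (nbPerm j i) := by decide +kernel
  have hsgn : ∀ j i, IsUnit (nbSign j i) := by
    intro j i
    rw [Int.isUnit_iff]
    revert j i
    decide +kernel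
  have hlat : ∀ j i,
      (nbCen j i 0 - nbSign j i * cen (nbType j i) (nbPerm j i 0)) % 22 = 0 ∧
      ∀ k, ((nbCen j i k - nbSign j i * cen (nbType j i) (nbPerm j i k)) -
        (nbCen j i 0 - nbSign j i * cen (nbType j i) (nbPerm j i 0))) % 66 = 0 := by decide +kernel
  have hlin : ∀ j i k, 2 * (11 * (cen j k - nbCen j i k) + ∑ l, (cen j l - nbCen j i l)) =
      nbScale j i * bary j i k := by decide +kernel
  have hconst : ∀ j i, (11 * ∑ k, cen j k ^ 2 + (∑ k, cen j k) ^ 2) -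
      (11 * ∑ k, nbCen j i k ^ 2 + (∑ k, nbCen j i k) ^ 2) - rad j + rad (nbType j i) =
      - nbScale j i * (3 * wt j i - ∑ k, bary j i k * cen j k) := by decide +kernel
  have hscale : ∀ j i, 0 < nbScale j i := by decide +kernel
  obtain ⟨e, he⟩ := hsgn j i
  have h := hmin (nbType j i)
    (Equiv.ofBijective _ (Finite.injective_iff_bijective.1 (hinj j i))) e _
    (mem_covLat_of_int (fun k => nbCen j i k - nbSign j i * cen (nbType j i) (nbPerm j i k))
      (hlat j i).1 (hlat j i).2)
  have hc : ((e : ℤ) : ℝ) • (cenR (nbType j i) ∘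
      (Equiv.ofBijective _ (Finite.injective_iff_bijective.1 (hinj j i)))) +
      (fun k => ((nbCen j i k - nbSign j i * cen (nbType j i) (nbPerm j i k) : ℤ) : ℝ)) =
      fun k => (nbCen j i k : ℝ) := by
    funext k
    simp [he, cenR]
  rw [hc] at h
  have hlin' : ∀ k, 2 * (11 * ((cen j k : ℝ) - nbCen j i k) + ∑ l, ((cen j l : ℝ) - nbCen j i l)) =
      nbScale j i * bary j i k := fun k => by exact_mod_cast hlin j i k
  have hconst' : (11 * ∑ k, (cen j k : ℝ) ^ 2 + (∑ k, (cen j k : ℝ)) ^ 2) -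
      (11 * ∑ k, (nbCen j i k : ℝ) ^ 2 + (∑ k, (nbCen j i k : ℝ)) ^ 2) - rad j + rad (nbType j i) =
      - nbScale j i * (3 * wt j i - ∑ k, (bary j i k : ℝ) * cen j k) := by
    exact_mod_cast hconst j i
  have hscale' : (0 : ℝ) < nbScale j i := by exact_mod_cast hscale j i
  have key : nf (x - cenR j) - rad j - (nf (x - fun k => (nbCen j i k : ℝ)) - rad (nbType j i)) =
      - (nbScale j i * bc j i x) := by
    have e1 : nf (x - cenR j) - rad j - (nf (x - fun k => (nbCen j i k : ℝ)) - rad (nbType j i)) =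
        - ∑ k, x k * (2 * (11 * ((cen j k : ℝ) - nbCen j i k) + ∑ l, ((cen j l : ℝ) - nbCen j i l)))
        + ((11 * ∑ k, (cen j k : ℝ) ^ 2 + (∑ k, (cen j k : ℝ)) ^ 2) -
      (11 * ∑ k, (nbCen j i k : ℝ) ^ 2 + (∑ k, (nbCen j i k : ℝ)) ^ 2) - rad j
        + rad (nbType j i)) := by
      simp only [nf, cenR, Pi.sub_apply, Fin.sum_univ_seven]
      ring
    rw [e1, hconst']
    simp only [hlin']
    simp only [bc, Fin.sum_univ_seven]
    ring
  have : 0 ≤ nbScale j i * bc j i x := by linarith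
  exact nonneg_of_mul_nonneg_right this hscale'

/-- The covering radius bound: every point is within squared distance `15/2` of the lattice,
which the scaling by `66` turns into `32670`. -/
theorem exists_covLat_close (x : Fin 7 → ℝ) : ∃ z ∈ covLat, nf (x - z) ≤ 32670 := by
  choose t ht htmin using fun a : Fin 3 × Equiv.Perm (Fin 7) × ℤˣ =>
    exists_closest (x - ((a.2.2 : ℤ) : ℝ) • (cenR a.1 ∘ a.2.1))
  obtain ⟨⟨j, σ, e⟩, hmin⟩ := Finite.exists_min (fun a : Fin 3 × Equiv.Perm (Fin 7) × ℤˣ =>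
    nf (x - ((a.2.2 : ℤ) : ℝ) • (cenR a.1 ∘ a.2.1) - t a) - rad a.1)
  set s := t (j, σ, e) with hs
  have hs' : s ∈ covLat := ht _
  have he2 : ((e : ℤ) : ℝ) * ((e : ℤ) : ℝ) = 1 := by
    rcases Int.units_eq_one_or e with rfl | rfl <;> norm_num
  -- The symmetry of `covLat` that moves the minimizing simplex to the representative of its type.
  set x' : Fin 7 → ℝ := ((e : ℤ) : ℝ) • ((x - s) ∘ σ.symm) with hx'
  have hx : x = ((e : ℤ) : ℝ) • (x' ∘ σ) + s := by
    funext i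
    simp only [hx', Pi.add_apply, Pi.smul_apply, Function.comp_apply, Equiv.symm_apply_apply,
      smul_eq_mul, Pi.sub_apply]
    linear_combination (s i - x i) * he2
  have htr : ∀ c : Fin 7 → ℝ, nf (x' - c) = nf (x - (((e : ℤ) : ℝ) • (c ∘ σ) + s)) := by
    intro c
    rw [← nf_comp (x' - c) σ, ← nf_unit_smul _ e]
    congr 1
    conv_rhs => rw [hx]
    funext i
    simp
    ring
  have hb : ∀ i, 0 ≤ bc j i x' := by
    refine bc_nonneg j x' fun j' σ' e' t' ht' => ?_
    have h1 := hmin (j', σ.trans σ', e * e')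
    have h2 := htmin (j', σ.trans σ', e * e') (((e : ℤ) : ℝ) • (t' ∘ σ) + s)
      (add_mem (covLat_unit_smul (covLat_comp ht' σ) e) hs')
    rw [htr, htr]
    have e1 : x - ((e : ℤ) : ℝ) • (cenR j ∘ σ) - s = x - (((e : ℤ) : ℝ) • (cenR j ∘ σ) + s) := by
      abel
    have e2 : x - (((e * e' : ℤˣ) : ℤ) : ℝ) • (cenR j' ∘ (σ.trans σ'))
        - (((e : ℤ) : ℝ) • (t' ∘ σ) + s) =
        x - (((e : ℤ) : ℝ) • ((((e' : ℤ) : ℝ) • (cenR j' ∘ σ') + t') ∘ σ) + s) := by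
      funext i
      simp
      ring
    simp only [e1] at h1
    simp only [e2] at h2
    linarith
  obtain ⟨i, hi⟩ := exists_vtx_close j x' hb
  refine ⟨((e : ℤ) : ℝ) • (vtxR j i ∘ σ) + s,
    add_mem (covLat_unit_smul (covLat_comp (vtxR_mem j i) σ) e) hs', ?_⟩
  rw [← htr]
  have hr : ∀ j, rad j ≤ 32670 := by decide +kernel
  have hr' : (rad j : ℝ) ≤ 32670 := by exact_mod_cast hr j
  exact hi.trans hr'

/-! ### The circumradii of nearby forms -/

open Filter Topology

theorem qf_add {S : Matrix (Fin 7) (Fin 7) ℝ} (hS : S.IsSymm) (a b : Fin 7 → ℝ) :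
    qf S (a + b) = qf S a + 2 * ((S *ᵥ a) ⬝ᵥ b) + qf S b := by
  have h1 : a ⬝ᵥ (S *ᵥ b) = (S *ᵥ a) ⬝ᵥ b := by
    rw [dotProduct_mulVec, ← mulVec_transpose, hS.eq]
  have h2 : b ⬝ᵥ (S *ᵥ a) = (S *ᵥ a) ⬝ᵥ b := dotProduct_comm _ _
  simp only [qf, mulVec_add, add_dotProduct, dotProduct_add, h1, h2]
  ring

/-- Forms near `S0` are uniformly positive definite. -/
theorem qf_lower {S : Matrix (Fin 7) (Fin 7) ℝ} (hS : ∀ i j, |S i j - S0 i j| ≤ 1 / 2)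
    (z : Fin 7 → ℝ) : 5 * ∑ i, z i ^ 2 ≤ qf S z := by
  have h1 : qf S z = qf S0 z + ∑ i, ∑ j, z i * (S i j - S0 i j) * z j := by
    simp only [qf, dotProduct, mulVec, Finset.mul_sum, ← Finset.sum_add_distrib]
    exact Finset.sum_congr rfl fun i _ => Finset.sum_congr rfl fun j _ => by ring
  have h2 : ∑ i, ∑ j, (-(z i ^ 2 + z j ^ 2) / 4) ≤ ∑ i, ∑ j, z i * (S i j - S0 i j) * z j := by
    refine Finset.sum_le_sum fun i _ => Finset.sum_le_sum fun j _ => ?_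
    have h := abs_le.1 (hS i j)
    nlinarith [sq_nonneg (z i + z j), sq_nonneg (z i - z j),
      mul_nonneg (sub_nonneg.2 h.2) (sq_nonneg (z i + z j)),
      mul_nonneg (sub_nonneg.2 h.2) (sq_nonneg (z i - z j)),
      mul_nonneg (sub_nonneg.2 h.1) (sq_nonneg (z i + z j)),
      mul_nonneg (sub_nonneg.2 h.1) (sq_nonneg (z i - z j))]
  rw [h1, qf_S0, nf]
  simp only [Fin.sum_univ_seven] at h2 ⊢
  have h3 : 0 ≤ z 0 ^ 2 + z 1 ^ 2 + z 2 ^ 2 + z 3 ^ 2 + z 4 ^ 2 + z 5 ^ 2 + z 6 ^ 2 := by positivity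
  have h4 := sq_nonneg (z 0 + z 1 + z 2 + z 3 + z 4 + z 5 + z 6)
  linarith

theorem eventually_close : ∀ᶠ S in 𝓝 S0, ∀ i j, |S i j - S0 i j| ≤ 1 / 2 := by
  rw [eventually_all]; intro i
  rw [eventually_all]; intro j
  have h : Continuous fun S : Matrix (Fin 7) (Fin 7) ℝ => |S i j - S0 i j| :=
    ((continuous_id.matrix_elem i j).sub continuous_const).abs
  exact (h.continuousAt.eventually_lt continuousAt_const (by norm_num)).mono fun S h => h.le

theorem continuous_qf :
    Continuous fun p : Matrix (Fin 7) (Fin 7) ℝ × (Fin 7 → ℝ) => qf p.1 p.2 :=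
  continuous_snd.dotProduct (continuous_fst.matrix_mulVec continuous_snd)

/-- The value `∑ᵢ αᵢ S[c - vᵢ]`, where `c = ∑ᵢ αᵢ vᵢ` is the circumcenter of the simplex of type `j`
for `S0`. It is linear in `S` and bounds the squared circumradius of the simplex from below for every
positive definite `S`. -/
noncomputable def mval (j : Fin 3) (S : Matrix (Fin 7) (Fin 7) ℝ) : ℝ :=
  ∑ i, (wt j i : ℝ) / 22 * qf S (cenR j - vtxR j i)

/-- The linear form that takes the value `(mval j S - S[c - vᵢ]) / 2` at `c - vᵢ` for every `i`. -/
noncomputable def ell (j : Fin 3) (S : Matrix (Fin 7) (Fin 7) ℝ) : Fin 7 → ℝ := fun k =>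
  -(1 / 132) * ∑ i, (mval j S - qf S (cenR j - vtxR j i)) * bary j i k

/-- The displacement of the circumcenter of the simplex of type `j` when `S0` is replaced by `S`. -/
noncomputable def del (j : Fin 3) (S : Matrix (Fin 7) (Fin 7) ℝ) : Fin 7 → ℝ := S⁻¹ *ᵥ ell j S

theorem mval_S0 (j : Fin 3) : mval j S0 = rad j := by
  simp only [mval, qf_S0, nf_cen_sub_vtx, ← Finset.sum_mul, ← Finset.sum_div, sum_wt]
  norm_num

theorem ell_S0 (j : Fin 3) : ell j S0 = 0 := by
  funext k
  simp [ell, mval_S0, qf_S0, nf_cen_sub_vtx]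

theorem continuous_qf_left (z : Fin 7 → ℝ) :
    Continuous fun S : Matrix (Fin 7) (Fin 7) ℝ => qf S z :=
  continuous_qf.comp (continuous_id.prodMk continuous_const)

theorem continuous_mval (j : Fin 3) : Continuous (mval j) :=
  continuous_finsetSum _ fun _ _ => continuous_const.mul (continuous_qf_left _)

theorem continuous_ell (j : Fin 3) : Continuous (ell j) :=
  continuous_pi fun _ => continuous_const.mul (continuous_finsetSum _ fun _ _ =>
    ((continuous_mval j).sub (continuous_qf_left _)).mul continuous_const)

/-- The inverse of `S0`. -/
noncomputable def P0 : Matrix (Fin 7) (Fin 7) ℝ :=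
  Matrix.of fun i j => if i = j then 17 / 198 else -1 / 198

theorem S0_mul_P0 : S0 * P0 = 1 := by
  ext i j
  fin_cases i <;> fin_cases j <;>
    simp [S0, P0, Matrix.mul_apply, Fin.sum_univ_seven] <;> norm_num

theorem S0_inv : S0⁻¹ = P0 := Matrix.inv_eq_right_inv S0_mul_P0

theorem det_S0_ne : S0.det ≠ 0 := by
  intro h
  have := congrArg Matrix.det S0_mul_P0
  simp [h] at this

theorem continuousAt_del (j : Fin 3) : ContinuousAt (del j) S0 := by
  have hdet : Continuous fun S : Matrix (Fin 7) (Fin 7) ℝ => S.det := continuous_id.matrix_det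
  have h1 : ContinuousAt (fun S : Matrix (Fin 7) (Fin 7) ℝ => S⁻¹) S0 := by
    simp only [Matrix.inv_def, Ring.inverse_eq_inv']
    exact (hdet.continuousAt.inv₀ det_S0_ne).smul (continuous_id.matrix_adjugate).continuousAt
  have h2 : Continuous fun p : Matrix (Fin 7) (Fin 7) ℝ × (Fin 7 → ℝ) => p.1 *ᵥ p.2 :=
    continuous_fst.matrix_mulVec continuous_snd
  exact h2.continuousAt.comp (h1.prodMk (continuous_ell j).continuousAt)

theorem del_S0 (j : Fin 3) : del j S0 = 0 := by simp [del, ell_S0]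

/-- By this identity all vertices are equidistant from `cenR j + del j S` with respect to `S`. -/
theorem ell_dot (j : Fin 3) (S : Matrix (Fin 7) (Fin 7) ℝ) (i : Fin 8) :
    ell j S ⬝ᵥ (cenR j - vtxR j i) = (mval j S - qf S (cenR j - vtxR j i)) / 2 := by
  -- The vertex `l` has barycentric coordinates `1` at `l` and `0` elsewhere.
  have h : ∀ j i l, ∑ k, bary j i k * (cen j k - 22 * vtx j l k) =
      3 * wt j i - if i = l then 66 else 0 := by decide +kernel
  have h' : ∀ a, ∑ k, (bary j a k : ℝ) * (cen j k - 22 * vtx j i k) =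
      3 * wt j a - if a = i then 66 else 0 := fun a => by exact_mod_cast h j a i
  set q : Fin 8 → ℝ := fun a => mval j S - qf S (cenR j - vtxR j a) with hq
  have hsum : ∑ a, (wt j a : ℝ) * q a = 0 := by
    simp only [hq, mul_sub, Finset.sum_sub_distrib, ← Finset.sum_mul, sum_wt]
    rw [mval, Finset.mul_sum, ← Finset.sum_sub_distrib]
    exact Finset.sum_eq_zero fun a _ => by ring
  calc ell j S ⬝ᵥ (cenR j - vtxR j i)
      = -(1 / 132) * ∑ a, q a * ∑ k, (bary j a k : ℝ) * (cen j k - 22 * vtx j i k) := by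
        simp only [dotProduct, ell, Pi.sub_apply, cenR, vtxR, Finset.mul_sum, Finset.sum_mul]
        rw [Finset.sum_comm]
        exact Finset.sum_congr rfl fun a _ => Finset.sum_congr rfl fun k _ => by
          simp only [hq]; ring
    _ = -(1 / 132) * (3 * ∑ a, (wt j a : ℝ) * q a - 66 * q i) := by
        simp only [h']
        have e : ∀ a, q a * (3 * wt j a - if a = i then 66 else 0) =
            3 * (wt j a * q a) - if a = i then 66 * q a else 0 := fun a => by
          split_ifs <;> ring
        simp only [e, Finset.sum_sub_distrib, ← Finset.mul_sum, Finset.sum_ite_eq',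
          Finset.mem_univ, if_true]
    _ = q i / 2 := by rw [hsum]; ring

set_option maxRecDepth 10000 in
/-- The circumscribed ball of the simplex of type `j` contains no lattice points except the
vertices. -/
theorem empty_ball (j : Fin 3) {z : Fin 7 → ℝ} (hz : z ∈ covLat) (h : nf (cenR j - z) ≤ rad j) :
    ∃ i, z = vtxR j i := by
  -- Modulo `66` there are three classes of lattice points. The bounds on single coordinates prune the
  -- enumeration; they hold because `11 * (cen j k - z k) ^ 2 ≤ 32670`.
  have key : ∀ j : Fin 3, ∀ r ∈ ([0, 1, 2] : List ℤ),
      ∀ n0 ∈ ([-1, 0, 1] : List ℤ), (cen j 0 - (66 * n0 + 22 * r)) ^ 2 ≤ 2970 →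
      ∀ n1 ∈ ([-1, 0, 1] : List ℤ), (cen j 1 - (66 * n1 + 22 * r)) ^ 2 ≤ 2970 →
      ∀ n2 ∈ ([-1, 0, 1] : List ℤ), (cen j 2 - (66 * n2 + 22 * r)) ^ 2 ≤ 2970 →
      ∀ n3 ∈ ([-1, 0, 1] : List ℤ), (cen j 3 - (66 * n3 + 22 * r)) ^ 2 ≤ 2970 →
      ∀ n4 ∈ ([-1, 0, 1] : List ℤ), (cen j 4 - (66 * n4 + 22 * r)) ^ 2 ≤ 2970 →
      ∀ n5 ∈ ([-1, 0, 1] : List ℤ), (cen j 5 - (66 * n5 + 22 * r)) ^ 2 ≤ 2970 →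
      ∀ n6 ∈ ([-1, 0, 1] : List ℤ), (cen j 6 - (66 * n6 + 22 * r)) ^ 2 ≤ 2970 →
      11 * ∑ k, (cen j k - (66 * ![n0, n1, n2, n3, n4, n5, n6] k + 22 * r)) ^ 2 +
        (∑ k, (cen j k - (66 * ![n0, n1, n2, n3, n4, n5, n6] k + 22 * r))) ^ 2 ≤ rad j →
      ∃ i, ∀ k, 66 * ![n0, n1, n2, n3, n4, n5, n6] k + 22 * r = 22 * vtx j i k := by
    decide +kernel
  obtain ⟨k, n, hkn⟩ := hz
  obtain ⟨r, m, hr, hm⟩ : ∃ (r : ℤ) (m : Fin 7 → ℤ), (r = 0 ∨ r = 1 ∨ r = 2) ∧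
      ∀ i, z i = ((66 * m i + 22 * r : ℤ) : ℝ) := by
    refine ⟨k % 3, fun i => n i + k / 3, by omega, fun i => ?_⟩
    have : 66 * n i + 22 * k = 66 * (n i + k / 3) + 22 * (k % 3) := by omega
    rw [hkn i, ← this]; push_cast; ring
  have hint : 11 * ∑ k, (cen j k - (66 * m k + 22 * r)) ^ 2 +
        (∑ k, (cen j k - (66 * m k + 22 * r))) ^ 2 ≤ rad j := by
    simp only [nf, Pi.sub_apply, cenR, hm] at h
    exact_mod_cast h
  have hrad : ∀ j, rad j ≤ 32670 := by decide +kernel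
  have hsq : ∀ i, (cen j i - (66 * m i + 22 * r)) ^ 2 ≤ 2970 := fun i => by
    have h1 := Finset.single_le_sum (f := fun k => (cen j k - (66 * m k + 22 * r)) ^ 2)
      (fun k _ => sq_nonneg _) (Finset.mem_univ i)
    have h2 := sq_nonneg (∑ k, (cen j k - (66 * m k + 22 * r)))
    linarith [hrad j]
  have hcen : ∀ j i, 0 ≤ cen j i ∧ cen j i ≤ 66 := by decide +kernel
  have hmem : ∀ i, m i ∈ ([-1, 0, 1] : List ℤ) := fun i => by
    have h1 : cen j i - (66 * m i + 22 * r) ≤ 54 := by nlinarith [hsq i]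
    have h2 : -54 ≤ cen j i - (66 * m i + 22 * r) := by nlinarith [hsq i]
    have h3 := hcen j i
    have : m i = -1 ∨ m i = 0 ∨ m i = 1 := by omega
    simpa using this
  have hmv : m = ![m 0, m 1, m 2, m 3, m 4, m 5, m 6] := by
    funext i; fin_cases i <;> rfl
  obtain ⟨i, hi⟩ := key j r (by simpa using hr) (m 0) (hmem 0) (hsq 0) (m 1) (hmem 1) (hsq 1)
    (m 2) (hmem 2) (hsq 2) (m 3) (hmem 3) (hsq 3) (m 4) (hmem 4) (hsq 4) (m 5) (hmem 5) (hsq 5)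
    (m 6) (hmem 6) (hsq 6) (by rw [← hmv]; exact hint)
  rw [← hmv] at hi
  refine ⟨i, funext fun k => ?_⟩
  rw [hm k, hi k]
  simp [vtxR]

/-- For `S` near `S0` the point `cenR j + del j S` has squared distance at least `mval j S` from all
lattice points: the vertices are at the common squared distance `mval j S + S[del j S]`, and no other
lattice point comes as close. -/
theorem lower_base (j : Fin 3) : ∀ᶠ S in 𝓝 S0, S.IsSymm →
    ∃ x, ∀ z ∈ covLat, mval j S ≤ qf S (x - z) := by
  have hrad : ∀ j, rad j ≤ 32670 := by decide +kernel
  have hrad' : (rad j : ℝ) ≤ 32670 := by exact_mod_cast hrad j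
  have hm : ∀ᶠ S in 𝓝 S0, mval j S < 33000 :=
    (continuous_mval j).continuousAt.eventually_lt continuousAt_const
      (by rw [mval_S0]; linarith)
  have hdet : ∀ᶠ S : Matrix (Fin 7) (Fin 7) ℝ in 𝓝 S0, S.det ≠ 0 :=
    continuous_id.matrix_det.continuousAt.eventually_ne det_S0_ne
  have hd : ∀ᶠ S in 𝓝 S0, ∑ k, (del j S k) ^ 2 < 1 := by
    have hc : Continuous fun d : Fin 7 → ℝ => ∑ k, d k ^ 2 := by fun_prop
    exact (hc.continuousAt.comp (continuousAt_del j)).eventually_lt continuousAt_const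
      (by simp [del_S0])
  -- Only finitely many lattice points can compete; the others are excluded by `qf_lower`.
  have hnear : ∀ᶠ S in 𝓝 S0, ∀ z ∈ {z | z ∈ covLat ∧ ∑ i, (cenR j i - z i) ^ 2 ≤ 14000},
      (∃ i, z = vtxR j i) ∨ mval j S < qf S (cenR j + del j S - z) := by
    rw [eventually_all_finite (covLat_finite _ _)]
    rintro z ⟨hz, -⟩
    by_cases hv : ∃ i, z = vtxR j i
    · exact Eventually.of_forall fun _ => Or.inl hv
    · have hlt : (rad j : ℝ) < nf (cenR j - z) := by
        by_contra! h
        exact hv (empty_ball j hz h)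
      have hc : ContinuousAt (fun S => qf S (cenR j + del j S - z)) S0 :=
        continuous_qf.continuousAt.comp (continuousAt_id.prodMk
          ((continuousAt_const.add (continuousAt_del j)).sub continuousAt_const))
      exact ((continuous_mval j).continuousAt.eventually_lt hc
        (by rw [mval_S0, del_S0, add_zero, qf_S0]; exact hlt)).mono fun _ h => Or.inr h
  filter_upwards [eventually_close, hm, hdet, hd, hnear] with S hclose hm hdet hd hnear hsymm
  refine ⟨cenR j + del j S, fun z hz => ?_⟩
  have hdist : ∀ z, cenR j + del j S - z = del j S + (cenR j - z) := fun z => by abel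
  have hq := qf_lower hclose
  by_cases hv : ∃ i, z = vtxR j i
  · obtain ⟨i, rfl⟩ := hv
    have hSd : S *ᵥ del j S = ell j S := by
      rw [del, mulVec_mulVec, Matrix.mul_nonsing_inv _ (isUnit_iff_ne_zero.2 hdet), one_mulVec]
    rw [hdist, qf_add hsymm, hSd, ell_dot]
    have h0 : 0 ≤ qf S (del j S) := le_trans (by positivity) (hq _)
    linarith
  · by_cases hK : ∑ i, (cenR j i - z i) ^ 2 ≤ 14000
    · exact ((hnear z ⟨hz, hK⟩).resolve_left hv).le
    · push Not at hK
      have h1 := hq (cenR j + del j S - z)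
      have h2 : ∑ i, (cenR j i - z i) ^ 2 ≤
          ∑ i, (2 * (cenR j + del j S - z) i ^ 2 + 2 * del j S i ^ 2) := by
        refine Finset.sum_le_sum fun i _ => ?_
        simp only [Pi.sub_apply, Pi.add_apply]
        nlinarith [sq_nonneg (cenR j i + 2 * del j S i - z i)]
      rw [Finset.sum_add_distrib, ← Finset.mul_sum, ← Finset.mul_sum] at h2
      linarith

/-! ### Averaging over coordinate permutations -/

theorem sum_perm_mul_right (S : Matrix (Fin 7) (Fin 7) ℝ) (τ : Equiv.Perm (Fin 7)) (i j : Fin 7) :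
    ∑ σ : Equiv.Perm (Fin 7), S (σ (τ i)) (σ (τ j)) = ∑ σ : Equiv.Perm (Fin 7), S (σ i) (σ j) :=
  Fintype.sum_equiv (Equiv.mulRight τ) _ _ fun σ => by simp

/-- Averaging a matrix over all coordinate permutations leaves one diagonal and one off-diagonal
entry, determined by the trace and the sum of all entries; both are stated for the sum over the
`7! = 5040` permutations. -/
theorem sum_perm (S : Matrix (Fin 7) (Fin 7) ℝ) (i j : Fin 7) :
    ∑ σ : Equiv.Perm (Fin 7), S (σ i) (σ j) =
      if i = j then 720 * S.trace else 120 * (∑ k, ∑ l, S k l - S.trace) := by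
  set A : Fin 7 → Fin 7 → ℝ := fun i j => ∑ σ : Equiv.Perm (Fin 7), S (σ i) (σ j) with hA
  have hdiag : ∀ i, A i i = A 0 0 := fun i => by
    have := sum_perm_mul_right S (Equiv.swap 0 i) 0 0
    simpa [hA] using this
  have hoff : ∀ i j, i ≠ j → A i j = A 0 1 := fun i j hij => by
    -- The permutation group is doubly transitive.
    have hτ : ∀ i j : Fin 7, i ≠ j → (Equiv.swap (Equiv.swap 0 i 1) j * Equiv.swap 0 i) 0 = i ∧
        (Equiv.swap (Equiv.swap 0 i 1) j * Equiv.swap 0 i) 1 = j := by decide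
    have := sum_perm_mul_right S (Equiv.swap (Equiv.swap 0 i 1) j * Equiv.swap 0 i) 0 1
    rwa [(hτ i j hij).1, (hτ i j hij).2] at this
  have hcard : Fintype.card (Equiv.Perm (Fin 7)) = 5040 := by
    rw [Fintype.card_perm]; rfl
  have htr : ∑ i, A i i = 5040 * S.trace := by
    simp only [hA]
    rw [Finset.sum_comm]
    have : ∀ σ : Equiv.Perm (Fin 7), ∑ i, S (σ i) (σ i) = S.trace := fun σ =>
      Equiv.sum_comp σ fun i => S i i
    simp [this, hcard]
  have hsum : ∑ i, ∑ j, A i j = 5040 * ∑ k, ∑ l, S k l := by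
    simp only [hA]
    have h1 : ∀ σ : Equiv.Perm (Fin 7), ∑ i, ∑ j, S (σ i) (σ j) = ∑ k, ∑ l, S k l := fun σ => by
      rw [← Equiv.sum_comp σ fun k => ∑ l, S k l]
      exact Finset.sum_congr rfl fun i _ => Equiv.sum_comp σ _
    simp only [Finset.sum_comm (s := (Finset.univ : Finset (Fin 7)))
      (t := (Finset.univ : Finset (Equiv.Perm (Fin 7)))), h1]
    simp [hcard]
  have hA' : ∀ i j, A i j = if i = j then A 0 0 else A 0 1 := fun i j => by
    split_ifs with h
    · rw [← h]; exact hdiag i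
    · exact hoff i j h
  simp only [hdiag] at htr
  rw [Finset.sum_congr rfl fun i _ => Finset.sum_congr rfl fun j _ => hA' i j] at hsum
  have hcount : ∀ a b : ℝ, ∑ i : Fin 7, ∑ j : Fin 7, (if i = j then a else b) = 7 * a + 42 * b :=
    fun a b => by simp [Fin.sum_univ_seven]; ring
  rw [hcount] at hsum
  simp only [Finset.sum_const, Finset.card_univ, Fintype.card_fin, nsmul_eq_mul] at htr
  push_cast at htr
  have h0 : A 0 0 = 720 * S.trace := by linarith
  have h1 : A 0 1 = 120 * (∑ k, ∑ l, S k l - S.trace) := by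
    linarith
  show A i j = _
  rw [hA' i j, h0, h1]

theorem qf_sum {ι : Type*} (s : Finset ι) (M : ι → Matrix (Fin 7) (Fin 7) ℝ) (z : Fin 7 → ℝ) :
    qf (∑ a ∈ s, M a) z = ∑ a ∈ s, qf (M a) z := by
  simp only [qf, sum_mulVec, dotProduct_sum]

theorem mval_sum {ι : Type*} (j : Fin 3) (s : Finset ι) (M : ι → Matrix (Fin 7) (Fin 7) ℝ) :
    mval j (∑ a ∈ s, M a) = ∑ a ∈ s, mval j (M a) := by
  simp only [mval, qf_sum, Finset.mul_sum]
  exact Finset.sum_comm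

theorem qf_two_entries (a b : ℝ) (z : Fin 7 → ℝ) :
    qf (Matrix.of fun i j => if i = j then a else b) z =
      (a - b) * ∑ i, z i ^ 2 + b * (∑ i, z i) ^ 2 := by
  simp only [qf, dotProduct, mulVec, Fin.sum_univ_seven, Matrix.of_apply]
  simp
  ring

theorem mval_two_entries (a b : ℝ) :
    mval 0 (Matrix.of fun i j => if i = j then a else b) = 2783 * (a - b) + 2057 * b ∧
    mval 1 (Matrix.of fun i j => if i = j then a else b) = 2871 * (a - b) + 1089 * b := by
  have h0 : ∑ i, wt 0 i * ∑ k, (cen 0 k - 22 * vtx 0 i k) ^ 2 = 22 * 2783 ∧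
      ∑ i, wt 0 i * (∑ k, (cen 0 k - 22 * vtx 0 i k)) ^ 2 = 22 * 2057 ∧
      ∑ i, wt 1 i * ∑ k, (cen 1 k - 22 * vtx 1 i k) ^ 2 = 22 * 2871 ∧
      ∑ i, wt 1 i * (∑ k, (cen 1 k - 22 * vtx 1 i k)) ^ 2 = 22 * 1089 := by decide +kernel
  have h1 : ∀ j, mval j (Matrix.of fun i j => if i = j then a else b) =
      (a - b) * (((∑ i, wt j i * ∑ k, (cen j k - 22 * vtx j i k) ^ 2 : ℤ) : ℝ) / 22) +
      b * (((∑ i, wt j i * (∑ k, (cen j k - 22 * vtx j i k)) ^ 2 : ℤ) : ℝ) / 22) := fun j => by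
    push_cast
    simp only [mval, qf_two_entries, Finset.sum_div, Finset.mul_sum, ← Finset.sum_add_distrib]
    refine Finset.sum_congr rfl fun i _ => ?_
    simp only [cenR, vtxR, Pi.sub_apply, Fin.sum_univ_seven]
    ring
  rw [h1, h1, h0.1, h0.2.1, h0.2.2.1, h0.2.2.2]
  push_cast
  constructor <;> ring

theorem trace_P0_mul (S : Matrix (Fin 7) (Fin 7) ℝ) :
    (P0 * S).trace = (S.trace - (∑ k, ∑ l, S k l) / 18) / 11 := by
  simp only [Matrix.trace, Matrix.diag, Matrix.mul_apply, P0, Fin.sum_univ_seven, Matrix.of_apply]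
  simp
  ring

/-- The weights `3/4` and `1/4` combine the averages of `mval 0` and `mval 1` over all coordinate
permutations to a multiple of `tr (S0⁻¹ S)`. -/
theorem trace_le_of_mval_le (S : Matrix (Fin 7) (Fin 7) ℝ) (m : ℝ)
    (h0 : ∀ σ : Equiv.Perm (Fin 7), mval 0 (S.submatrix σ σ) ≤ m)
    (h1 : ∀ σ : Equiv.Perm (Fin 7), mval 1 (S.submatrix σ σ) ≤ m) :
    32670 * ((P0 * S).trace / 7) ≤ m := by
  have hA : ∑ σ : Equiv.Perm (Fin 7), S.submatrix σ σ = Matrix.of fun i j =>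
      if i = j then 720 * S.trace else 120 * (∑ k, ∑ l, S k l - S.trace) := by
    ext i j
    rw [Matrix.sum_apply, Matrix.of_apply, ← sum_perm S i j]
    rfl
  have hcard : Fintype.card (Equiv.Perm (Fin 7)) = 5040 := by
    rw [Fintype.card_perm]; rfl
  have e0 := Finset.sum_le_sum fun σ (_ : σ ∈ Finset.univ) => h0 σ
  have e1 := Finset.sum_le_sum fun σ (_ : σ ∈ Finset.univ) => h1 σ
  rw [← mval_sum, hA, (mval_two_entries _ _).1] at e0
  rw [← mval_sum, hA, (mval_two_entries _ _).2] at e1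
  simp only [Finset.sum_const, Finset.card_univ, hcard, nsmul_eq_mul] at e0 e1
  push_cast at e0 e1
  rw [trace_P0_mul]
  linarith

/-- In a neighborhood of `S0` some point is far from every lattice point: its squared distance is at
least `15/2 * tr (S0⁻¹ S) / 7`, multiplied by `66 ^ 2` because of the scaling of `covLat`. -/
theorem eventually_exists_deep : ∀ᶠ S in 𝓝 S0, S.IsSymm →
    ∃ x, ∀ z ∈ covLat, 32670 * ((P0 * S).trace / 7) ≤ qf S (x - z) := by
  have hperm : ∀ j, ∀ᶠ S in 𝓝 S0, ∀ σ : Equiv.Perm (Fin 7), (S.submatrix σ σ).IsSymm →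
      ∃ x, ∀ z ∈ covLat, mval j (S.submatrix σ σ) ≤ qf (S.submatrix σ σ) (x - z) := fun j => by
    rw [eventually_all]
    intro σ
    have hc : Tendsto (fun S : Matrix (Fin 7) (Fin 7) ℝ => S.submatrix σ σ) (𝓝 S0) (𝓝 S0) := by
      have h1 : Continuous fun S : Matrix (Fin 7) (Fin 7) ℝ => S.submatrix σ σ :=
        continuous_id.matrix_submatrix σ σ
      have h2 : S0.submatrix σ σ = S0 := by ext i j; simp [S0]
      simpa only [h2] using h1.tendsto S0
    exact hc.eventually (lower_base j)
  filter_upwards [hperm 0, hperm 1] with S h0 h1 hS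
  have hex : ∃ a : Fin 2 × Equiv.Perm (Fin 7),
      ∀ b : Fin 2 × Equiv.Perm (Fin 7), mval (Fin.castSucc b.1) (S.submatrix b.2 b.2) ≤
        mval (Fin.castSucc a.1) (S.submatrix a.2 a.2) := Finite.exists_max _
  obtain ⟨⟨j, σ⟩, hmax⟩ := hex
  have hm := trace_le_of_mval_le S _ (fun τ => hmax (0, τ)) (fun τ => hmax (1, τ))
  have hsym : (S.submatrix σ σ).IsSymm := hS.submatrix σ
  obtain ⟨x, hx⟩ : ∃ x, ∀ z ∈ covLat,
      mval (Fin.castSucc j) (S.submatrix σ σ) ≤ qf (S.submatrix σ σ) (x - z) := by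
    fin_cases j
    · exact h0 σ hsym
    · exact h1 σ hsym
  refine ⟨x ∘ σ.symm, fun z hz => hm.trans ((hx _ (covLat_comp hz σ)).trans (le_of_eq ?_))⟩
  have h2 : ∀ y : Fin 7 → ℝ, qf (S.submatrix σ σ) y = qf S (y ∘ σ.symm) := fun y => by
    rw [qf, submatrix_mulVec_equiv, ← comp_equiv_symm_dotProduct, qf]
  rw [h2]
  congr 1
  funext i
  simp

/-! ### The determinant and the trace -/

theorem P0_posSemidef : P0.PosSemidef := by
  refine PosSemidef.of_dotProduct_mulVec_nonneg ?_ fun x => ?_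
  · ext i j
    simp [P0, eq_comm]
  · have h : qf P0 x = 1 / 11 * ∑ i, x i ^ 2 + -1 / 198 * (∑ i, x i) ^ 2 := by
      rw [P0, qf_two_entries]; ring
    have h2 := sq_sum_le_card_mul_sum_sq (s := (Finset.univ : Finset (Fin 7))) (f := x)
    have h3 : 0 ≤ ∑ i, x i ^ 2 := Finset.sum_nonneg fun i _ => sq_nonneg _
    simp at h2
    rw [star_trivial]
    change 0 ≤ qf P0 x
    rw [h]
    linarith

/-- The inequality of arithmetic and geometric means for the eigenvalues of a matrix. -/
theorem det_le_trace_pow {X : Matrix (Fin 7) (Fin 7) ℝ} (hX : X.PosSemidef) :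
    X.det ≤ (X.trace / 7) ^ 7 := by
  have h1 := hX.isHermitian.det_eq_prod_eigenvalues
  have h2 := hX.isHermitian.trace_eq_sum_eigenvalues
  have h0 := hX.eigenvalues_nonneg
  set e := hX.isHermitian.eigenvalues
  have h := Real.geom_mean_le_arith_mean_weighted Finset.univ (fun _ => (7 : ℝ)⁻¹) e
    (fun _ _ => by norm_num) (by simp) (fun i _ => h0 i)
  rw [Real.finsetProd_rpow _ _ fun i _ => h0 i, ← Finset.mul_sum] at h
  have hp : 0 ≤ ∏ i, e i := Finset.prod_nonneg fun i _ => h0 i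
  have h3 := pow_le_pow_left₀ (Real.rpow_nonneg hp _) h 7
  rw [show ((7 : ℝ)⁻¹) = ((7 : ℕ) : ℝ)⁻¹ by norm_num,
    Real.rpow_inv_natCast_pow hp (by norm_num)] at h3
  simp only [RCLike.ofReal_real_eq_id, id] at h1 h2
  rw [h1, h2]
  rw [div_eq_inv_mul]
  exact h3

open scoped MatrixOrder Matrix.Norms.L2Operator in
/-- The factorization `S0⁻¹ = Bᴴ B` replaces `S0⁻¹ S` by the positive semidefinite matrix `B S Bᴴ`, which
has the same trace and determinant. -/
theorem det_P0_mul_le {S : Matrix (Fin 7) (Fin 7) ℝ} (hS : S.PosSemidef) :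
    0 ≤ (P0 * S).trace ∧ P0.det * S.det ≤ ((P0 * S).trace / 7) ^ 7 := by
  obtain ⟨B, hB⟩ := CStarAlgebra.nonneg_iff_eq_star_mul_self.mp P0_posSemidef.nonneg
  rw [star_eq_conjTranspose] at hB
  have hX : (B * S * Bᴴ).PosSemidef := hS.mul_mul_conjTranspose_same B
  have htr : (P0 * S).trace = (B * S * Bᴴ).trace := by
    rw [hB, Matrix.mul_assoc, Matrix.trace_mul_comm]
  have hdet : P0.det * S.det = (B * S * Bᴴ).det := by
    rw [hB]; simp only [Matrix.det_mul]; ring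
  rw [htr, hdet]
  exact ⟨hX.trace_nonneg, det_le_trace_pow hX⟩

/-! ### Passage to the coordinates of `Q7c` -/

/-- The matrix of the coordinate change that carries `covLat` to `66 ℤ⁷`. It pulls `Q7c` back to `S0`. -/
def baseU : Matrix (Fin 7) (Fin 7) ℝ :=
  !![1, 0, 0, 0, 0, 0, -1;
     0, 1, 0, 0, 0, 0, -1;
     0, 0, 1, 0, 0, 0, -1;
     0, 0, 0, 1, 0, 0, -1;
     0, 0, 0, 0, 1, 0, -1;
     0, 0, 0, 0, 0, 1, 2;
     0, 0, 0, 0, 0, 0, 3]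

/-- The inverse coordinate change, which carries `ℤ⁷` to `covLat`. -/
def emb (x : Fin 7 → ℝ) : Fin 7 → ℝ :=
  ![66 * x 0 + 22 * x 6, 66 * x 1 + 22 * x 6, 66 * x 2 + 22 * x 6, 66 * x 3 + 22 * x 6,
    66 * x 4 + 22 * x 6, 66 * (x 5 - x 6) + 22 * x 6, 22 * x 6]

theorem baseU_mulVec_emb (x : Fin 7 → ℝ) : baseU *ᵥ emb x = (66 : ℝ) • x := by
  funext i
  fin_cases i <;> simp [baseU, emb, mulVec, dotProduct, Fin.sum_univ_seven] <;> ring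

theorem emb_mem (v : Fin 7 → ℤ) : emb (fun i => (v i : ℝ)) ∈ covLat := by
  refine ⟨v 6, ![v 0, v 1, v 2, v 3, v 4, v 5 - v 6, 0], fun i => ?_⟩
  fin_cases i <;> simp [emb]

theorem exists_of_mem_covLat {z : Fin 7 → ℝ} (hz : z ∈ covLat) :
    ∃ v : Fin 7 → ℤ, baseU *ᵥ z = (66 : ℝ) • fun i => (v i : ℝ) := by
  obtain ⟨k, n, h⟩ := hz
  refine ⟨![n 0 - n 6, n 1 - n 6, n 2 - n 6, n 3 - n 6, n 4 - n 6, n 5 + 2 * n 6 + k,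
    3 * n 6 + k], ?_⟩
  funext i
  fin_cases i <;> simp [baseU, mulVec, dotProduct, Fin.sum_univ_seven, h] <;> ring

theorem transpose_mul_Q7c_mul : baseUᵀ * Q7c * baseU = S0 := by
  ext i j
  fin_cases i <;> fin_cases j <;>
    simp [Matrix.mul_apply, baseU, Q7c, S0, Fin.sum_univ_seven] <;> norm_num

theorem qf_transpose_mul_mul (Q : Matrix (Fin 7) (Fin 7) ℝ) (z : Fin 7 → ℝ) :
    qf (baseUᵀ * Q * baseU) z = qf Q (baseU *ᵥ z) := by
  simp only [qf, ← mulVec_mulVec]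
  rw [dotProduct_mulVec z, vecMul_transpose]

theorem qf_smul (Q : Matrix (Fin 7) (Fin 7) ℝ) (c : ℝ) (x : Fin 7 → ℝ) :
    qf Q (c • x) = c ^ 2 * qf Q x := by
  simp only [qf, mulVec_smul, dotProduct_smul, smul_dotProduct, smul_eq_mul]
  ring

theorem bddBelow_qf {Q : Matrix (Fin 7) (Fin 7) ℝ} (hQ : ∀ x, 0 ≤ qf Q x) (x : Fin 7 → ℝ) :
    BddBelow (Set.range fun v : Fin 7 → ℤ => qf Q (x - fun i => (v i : ℝ))) :=
  ⟨0, by rintro _ ⟨v, rfl⟩; exact hQ _⟩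

/-- Rounding every coordinate bounds the inhomogeneous minimum. -/
theorem bddAbove_iInf {Q : Matrix (Fin 7) (Fin 7) ℝ} (hQ : ∀ x, 0 ≤ qf Q x) :
    BddAbove (Set.range fun x : Fin 7 → ℝ =>
      ⨅ v : Fin 7 → ℤ, qf Q (x - fun i => (v i : ℝ))) := by
  refine ⟨∑ i, ∑ j, |Q i j|, ?_⟩
  rintro _ ⟨x, rfl⟩
  refine (ciInf_le (bddBelow_qf hQ x) fun i => ⌊x i⌋).trans ?_
  simp only [qf, dotProduct, mulVec, Finset.mul_sum]
  refine Finset.sum_le_sum fun i _ => Finset.sum_le_sum fun j _ => ?_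
  simp only [Pi.sub_apply, Int.self_sub_floor]
  refine (le_abs_self _).trans ?_
  rw [abs_mul, abs_mul, abs_of_nonneg (Int.fract_nonneg (x i)),
    abs_of_nonneg (Int.fract_nonneg (x j))]
  have h1 := (Int.fract_lt_one (x i)).le
  have h2 := (Int.fract_lt_one (x j)).le
  have h3 : |Q i j| * Int.fract (x j) ≤ |Q i j| := mul_le_of_le_one_right (abs_nonneg _) h2
  exact (mul_le_of_le_one_left (mul_nonneg (abs_nonneg _) (Int.fract_nonneg _)) h1).trans h3

theorem qf_Q7c (y : Fin 7 → ℝ) : qf Q7c (baseU *ᵥ y) = nf y := by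
  rw [← qf_transpose_mul_mul, transpose_mul_Q7c_mul, qf_S0]

theorem qf_Q7c_nonneg (x : Fin 7 → ℝ) : 0 ≤ qf Q7c x := by
  have h := qf_Q7c (emb x)
  rw [baseU_mulVec_emb, qf_smul] at h
  nlinarith [nf_nonneg (emb x)]

theorem inhomMin_Q7c_le : inhomMin Q7c ≤ 15 / 2 := by
  refine ciSup_le fun x => ?_
  obtain ⟨z, hz, hle⟩ := exists_covLat_close (emb x)
  obtain ⟨v, hv⟩ := exists_of_mem_covLat hz
  refine (ciInf_le (bddBelow_qf qf_Q7c_nonneg x) v).trans ?_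
  rw [← qf_Q7c, mulVec_sub, baseU_mulVec_emb, hv, ← smul_sub, qf_smul] at hle
  linarith

theorem inhomMin_Q7c_nonneg : 0 ≤ inhomMin Q7c :=
  Real.iSup_nonneg fun _ => Real.iInf_nonneg fun _ => qf_Q7c_nonneg _

/-- A deep hole in the coordinates of `covLat` bounds the inhomogeneous minimum from below; the factor
`4356 = 66 ^ 2` comes from the scaling of `covLat`. -/
theorem le_inhomMin {Q : Matrix (Fin 7) (Fin 7) ℝ} (hQ : ∀ x, 0 ≤ qf Q x) {m : ℝ}
    (h : ∃ x, ∀ z ∈ covLat, 4356 * m ≤ qf (baseUᵀ * Q * baseU) (x - z)) : m ≤ inhomMin Q := by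
  obtain ⟨x, hx⟩ := h
  refine le_trans ?_ (le_ciSup (bddAbove_iInf hQ) ((66 : ℝ)⁻¹ • (baseU *ᵥ x)))
  refine le_ciInf fun v => ?_
  have h := hx _ (emb_mem v)
  have e : baseU *ᵥ (x - emb fun i => (v i : ℝ)) =
      (66 : ℝ) • ((66 : ℝ)⁻¹ • (baseU *ᵥ x) - fun i => (v i : ℝ)) := by
    rw [mulVec_sub, baseU_mulVec_emb, smul_sub, smul_inv_smul₀ (by norm_num)]
  rw [qf_transpose_mul_mul, e, qf_smul] at h
  linarith

/-- The matrix `Q₇^c` is a locally optimal lattice covering: on some open neighborhood of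
it, no symmetric positive definite matrix has smaller covering density. -/
theorem Q7c_locally_optimal_covering :
    ∃ U : Set (Matrix (Fin 7) (Fin 7) ℝ), IsOpen U ∧ Q7c ∈ U ∧
      ∀ Q' ∈ U, Q'.IsSymm → Q'.PosDef → covDensity Q7c ≤ covDensity Q' := by
  have hc : Tendsto (fun Q : Matrix (Fin 7) (Fin 7) ℝ => baseUᵀ * Q * baseU) (𝓝 Q7c) (𝓝 S0) := by
    have h : Continuous fun Q : Matrix (Fin 7) (Fin 7) ℝ => baseUᵀ * Q * baseU :=
      (continuous_const.matrix_mul continuous_id).matrix_mul continuous_const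
    simpa only [transpose_mul_Q7c_mul] using h.tendsto Q7c
  obtain ⟨U, hU, hUo, hQU⟩ := eventually_nhds_iff.1 (hc.eventually eventually_exists_deep)
  refine ⟨U, hUo, hQU, fun Q hQ hsymm hpos => ?_⟩
  set S := baseUᵀ * Q * baseU with hS
  have hS_symm : S.IsSymm := by
    simp [Matrix.IsSymm, hS, Matrix.transpose_mul, hsymm.eq, Matrix.mul_assoc]
  have hS_pos : S.PosSemidef := by
    simpa [hS, conjTranspose_eq_transpose_of_trivial] using
      hpos.posSemidef.conjTranspose_mul_mul_same baseU
  have hQ_nonneg : ∀ x, 0 ≤ qf Q x := fun x => by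
    simpa [qf] using hpos.posSemidef.dotProduct_mulVec_nonneg x
  set τ := (P0 * S).trace / 7 with hτ
  have hμ : 15 / 2 * τ ≤ inhomMin Q := by
    refine le_inhomMin hQ_nonneg ?_
    obtain ⟨x, hx⟩ := hU Q hQ hS_symm
    exact ⟨x, fun z hz => by linarith [hx z hz]⟩
  obtain ⟨htr, hdet⟩ := det_P0_mul_le hS_pos
  have hτ0 : 0 ≤ τ := by positivity
  have hQdet : 0 < Q.det := hpos.det_pos
  have hP0 : S0.det * P0.det = 1 := by rw [← det_mul, S0_mul_P0, det_one]
  have hS0det : S0.det = baseU.det ^ 2 * Q7c.det := by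
    rw [← transpose_mul_Q7c_mul]; simp only [det_mul, det_transpose]; ring
  have hSdet : S.det = baseU.det ^ 2 * Q.det := by
    rw [hS]; simp only [det_mul, det_transpose]; ring
  have hQ7det : 0 < Q7c.det := by
    have h1 : 0 ≤ P0.det := P0_posSemidef.det_nonneg
    by_contra! h
    have : S0.det ≤ 0 := hS0det ▸ mul_nonpos_of_nonneg_of_nonpos (sq_nonneg _) h
    nlinarith
  have hdetle : Q.det ≤ τ ^ 7 * Q7c.det := by
    have e : P0.det * S.det * Q7c.det = Q.det := by
      rw [hSdet]
      calc P0.det * (baseU.det ^ 2 * Q.det) * Q7c.det =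
          ((baseU.det ^ 2 * Q7c.det) * P0.det) * Q.det := by ring
        _ = Q.det := by rw [← hS0det, hP0, one_mul]
    rw [← e]
    exact mul_le_mul_of_nonneg_right hdet hQ7det.le
  refine mul_le_mul_of_nonneg_right (Real.sqrt_le_sqrt ?_) ENNReal.toReal_nonneg
  rw [div_le_div_iff₀ hQ7det hQdet]
  calc inhomMin Q7c ^ 7 * Q.det ≤ (15 / 2) ^ 7 * (τ ^ 7 * Q7c.det) :=
        mul_le_mul (pow_le_pow_left₀ inhomMin_Q7c_nonneg inhomMin_Q7c_le 7) hdetle hQdet.le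
          (by positivity)
    _ = (15 / 2 * τ) ^ 7 * Q7c.det := by ring
    _ ≤ inhomMin Q ^ 7 * Q7c.det :=
        mul_le_mul_of_nonneg_right (pow_le_pow_left₀ (by positivity) hμ 7) hQ7det.le
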